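/- Let n ≥ 1 and let T₁,…,Tₙ : H → Set H be monotone operators on a real Hilbert space H such that T_l is μ-strongly monotone for some l ∈ {1,…,n} and μ > 0, and T_i is single-valued and Γ_i-cocoercive for i = 1,…,n−1. Let z* ∈ H satisfy −(T₁z* + ⋯ + T_{n−1}z*) ∈ Tₙ z*, and set p* = (z*, T₁z*, …, T_{n−1}z*) ∈ Hⁿ. Suppose the projective splitting algorithm is run forever without termination: for every k ≥ 1, one iteration of projective splitting is performed at p^k = (z^k, w₁^k,…,w_{n−1}^k) (producing points x_i^k, y_i^k with y_i^k ∈ T_i x_i^k and satisfying the backward/forward relations, error conditions with parameters σ ∈ [0,1), δ ≥ 0, and stepsize conditions with bounds ρ̲, ρ̄, ρ̄_i), the gradient g_k of the separator function φ_k built from (x_i^k, y_i^k) is nonzero, and p^{k+1} = p^k − β_k (φ_k(p^k)/‖g_k‖_γ²) g_k with β_k ∈ [β̲, β̄], 0 < β̲ ≤ β̄ < 2. Then there exists r ∈ [0,1), independent of k, such that ‖p^{k+1} − p*‖_γ² ≤ r ‖p^k − p*‖_γ² for all k ≥ 1; in particular ‖p^k − p*‖_γ² ≤ r^{k−1} ‖p¹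 − p*‖_γ², so the iterates converge to p* at a linear rate. -/

import Mathlib

open scoped RealInnerProductSpace

/-!
The separator `φ` is affine with gradient `g` for the `γ`-weighted inner product. Write `S` for the
residual `∑ i, (‖z - x i‖² + ‖y i - w i‖²)` and `E` for the error
`‖x l - z*‖² + ∑ i < n, ‖y i - w* i‖²`. The backward and forward steps give `φ p ≥ c S`, and strong
monotonicity together with cocoercivity gives `-φ p* ≥ κ E`, while `‖g‖² ≤ C S` and
`‖p - p*‖² ≤ K (S + E)`. A relaxed projection onto `{φ ≤ 0}` lowers `‖p - p*‖²` by
`(φ p / ‖g‖²) (β (2 - β) φ p - 2 β φ p*)`; here `φ p / ‖g‖² ≥ c / C` and the second factor is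
bounded below by a multiple of `S + E`, hence of `‖p - p*‖²`.
-/

namespace ProjectiveSplitting

theorem min_mul_add_le {a b s t : ℝ} (hs : 0 ≤ s) (ht : 0 ≤ t) :
    min a b * (s + t) ≤ a * s + b * t := by
  rw [mul_add]
  gcongr
  · exact min_le_left a b
  · exact min_le_right a b

theorem min_div_two_mul_add_le {a b s t u : ℝ} (hs : 0 ≤ s) (ht : 0 ≤ t) (hsu : a * s ≤ u)
    (htu : b * t ≤ u) : min a b / 2 * (s + t) ≤ u := by
  linarith [min_mul_add_le (a := a) (b := b) hs ht]

open Filter Topology in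
theorem exists_pos_forall_mul_le {ι κ : Type*} [Finite ι] {f g : ι → κ → ℝ}
    (hf : ∀ i k, 0 ≤ f i k) (h : ∀ i, ∃ c > 0, ∀ k, c * f i k ≤ g i k) :
    ∃ c > 0, ∀ i k, c * f i k ≤ g i k := by
  choose c hc hfg using h
  obtain ⟨ε, hεc, hε⟩ := ((eventually_all.2 fun i => Ioc_mem_nhdsGT (hc i)).and
    (self_mem_nhdsWithin : Set.Ioi (0 : ℝ) ∈ 𝓝[>] 0)).exists
  exact ⟨ε, hε, fun i k => (mul_le_mul_of_nonneg_right (hεc i).2 (hf i k)).trans (hfg i k)⟩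

section SeminormedAddCommGroup

variable {V : Type*} [SeminormedAddCommGroup V]

theorem norm_sub_sq_le_two_mul (a b c : V) : ‖a - c‖ ^ 2 ≤ 2 * (‖a - b‖ ^ 2 + ‖b - c‖ ^ 2) :=
  (pow_le_pow_left₀ (norm_nonneg _) (norm_sub_le_norm_sub_add_norm_sub a b c) 2).trans add_sq_le

theorem norm_sum_sq_le_card_mul {ι : Type*} (s : Finset ι) (f : ι → V) :
    ‖∑ i ∈ s, f i‖ ^ 2 ≤ s.card * ∑ i ∈ s, ‖f i‖ ^ 2 :=
  (pow_le_pow_left₀ (norm_nonneg _) (norm_sum_le s f) 2).trans sq_sum_le_card_mul_sum_sq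

end SeminormedAddCommGroup

section RelaxedProjection

variable {V : Type*} [SeminormedAddCommGroup V] [InnerProductSpace ℝ V]

theorem norm_relaxedProjection_sub_sq {p q g : V} {φ ψ : ℝ} (β : ℝ) (hg : ‖g‖ ≠ 0)
    (haffine : ⟪p - q, g⟫ = φ - ψ) :
    ‖p - (β * φ / ‖g‖ ^ 2) • g - q‖ ^ 2 =
      ‖p - q‖ ^ 2 - φ / ‖g‖ ^ 2 * (β * (2 - β) * φ - 2 * β * ψ) := by
  rw [sub_right_comm, norm_sub_sq_real, real_inner_smul_right, haffine, norm_smul, mul_pow,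
    Real.norm_eq_abs, sq_abs]
  field_simp
  ring

theorem exists_relaxedProjection_contraction {c C κ K βlo βhi : ℝ} (hc : 0 < c) (hC : 0 < C)
    (hκ : 0 < κ) (hK : 0 < K) (hβlo : 0 < βlo) (hβhi : βhi < 2) :
    ∃ r, 0 ≤ r ∧ r < 1 ∧ ∀ {p q g : V} {φ ψ S E β : ℝ}, ‖g‖ ≠ 0 → ⟪p - q, g⟫ = φ - ψ →
      0 ≤ S → 0 ≤ E → c * S ≤ φ → κ * E ≤ -ψ → ‖g‖ ^ 2 ≤ C * S → ‖p - q‖ ^ 2 ≤ K * (S + E) →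
      βlo ≤ β → β ≤ βhi → ‖p - (β * φ / ‖g‖ ^ 2) • g - q‖ ^ 2 ≤ r * ‖p - q‖ ^ 2 := by
  have hβhi' : 0 < 2 - βhi := sub_pos.2 hβhi
  set t := min (βlo * (2 - βhi) * c) (2 * βlo * κ)
  have ht : 0 < t := lt_min (by positivity) (by positivity)
  refine ⟨max 0 (1 - c / C * (t / K)), le_max_left _ _,
    max_lt one_pos (sub_lt_self _ (by positivity)), ?_⟩
  intro p q g φ ψ S E β hg haffine hS hE hφ hψ hgS hpq hlo hhi
  have hstep : c / C ≤ φ / ‖g‖ ^ 2 := by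
    rw [div_le_div_iff₀ hC (by positivity)]
    calc c * ‖g‖ ^ 2 ≤ c * (C * S) := by gcongr
      _ = c * S * C := by ring
      _ ≤ φ * C := by gcongr
  have hφ₀ : 0 ≤ φ := (by positivity : 0 ≤ c * S).trans hφ
  have hβ : 0 < β := hβlo.trans_le hlo
  have hβ' : 0 < 2 - β := hβhi'.trans_le (by gcongr)
  have hdecrease : t / K * ‖p - q‖ ^ 2 ≤ β * (2 - β) * φ - 2 * β * ψ := by
    calc t / K * ‖p - q‖ ^ 2 ≤ t / K * (K * (S + E)) := by gcongr
      _ = t * (S + E) := by field_simp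
      _ ≤ βlo * (2 - βhi) * c * S + 2 * βlo * κ * E := min_mul_add_le hS hE
      _ = βlo * (2 - βhi) * (c * S) + 2 * βlo * (κ * E) := by ring
      _ ≤ β * (2 - β) * φ + 2 * β * -ψ := by gcongr
      _ = β * (2 - β) * φ - 2 * β * ψ := by ring
  calc ‖p - (β * φ / ‖g‖ ^ 2) • g - q‖ ^ 2
      = ‖p - q‖ ^ 2 - φ / ‖g‖ ^ 2 * (β * (2 - β) * φ - 2 * β * ψ) :=
        norm_relaxedProjection_sub_sq β hg haffine
    _ ≤ ‖p - q‖ ^ 2 - c / C * (t / K * ‖p - q‖ ^ 2) := by gcongr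
    _ = (1 - c / C * (t / K)) * ‖p - q‖ ^ 2 := by ring
    _ ≤ max 0 (1 - c / C * (t / K)) * ‖p - q‖ ^ 2 := by gcongr; exact le_max_right _ _

end RelaxedProjection

section Steps

variable {H : Type*} [SeminormedAddCommGroup H] [InnerProductSpace ℝ H] {z x y w e : H}
  {ρ σ : ℝ}

theorem backwardStep_primal_le (hstep : x + ρ • y = z + ρ • w + e)
    (herr : -(σ * ‖z - x‖ ^ 2) ≤ ⟪z - x, e⟫) :
    (1 - σ) * ‖z - x‖ ^ 2 ≤ ρ * ⟪z - x, y - w⟫ := by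
  have hyw : ρ • (y - w) = z - x + e := by
    rw [smul_sub, sub_eq_iff_eq_add, ← sub_eq_zero]
    rw [← sub_eq_zero] at hstep
    rw [← hstep]
    abel
  rw [← real_inner_smul_right, hyw, inner_add_right, real_inner_self_eq_norm_sq]
  linarith

theorem backwardStep_dual_le (hstep : x + ρ • y = z + ρ • w + e)
    (herr : ⟪e, y - w⟫ ≤ ρ * σ * ‖y - w‖ ^ 2) :
    ρ * (1 - σ) * ‖y - w‖ ^ 2 ≤ ⟪z - x, y - w⟫ := by
  have hzx : z - x = ρ • (y - w) - e := by
    rw [smul_sub, eq_sub_iff_add_eq, ← sub_eq_zero]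
    rw [← sub_eq_zero] at hstep
    rw [← neg_eq_zero, ← hstep]
    abel
  rw [hzx, inner_sub_left, real_inner_smul_left, real_inner_self_eq_norm_sq]
  linarith

theorem exists_pos_mul_le_inner_backwardStep {ρlo ρhi : ℝ} (hρlo : 0 < ρlo) (hρ : ρlo ≤ ρhi)
    (hσ : σ < 1) :
    ∃ c > 0, ∀ {z x y w e : H} {ρ : ℝ}, ρlo ≤ ρ → ρ ≤ ρhi → x + ρ • y = z + ρ • w + e →
      -(σ * ‖z - x‖ ^ 2) ≤ ⟪z - x, e⟫ → ⟪e, y - w⟫ ≤ ρ * σ * ‖y - w‖ ^ 2 →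
      c * (‖z - x‖ ^ 2 + ‖y - w‖ ^ 2) ≤ ⟪z - x, y - w⟫ := by
  have hρhi : 0 < ρhi := hρlo.trans_le hρ
  have hσ' : 0 < 1 - σ := sub_pos.2 hσ
  refine ⟨min ((1 - σ) / ρhi) (ρlo * (1 - σ)) / 2,
    half_pos (lt_min (div_pos hσ' hρhi) (mul_pos hρlo hσ')), ?_⟩
  intro z x y w e ρ hlo hhi hstep herr_primal herr_dual
  have hρ₀ : 0 < ρ := hρlo.trans_le hlo
  refine min_div_two_mul_add_le (sq_nonneg _) (sq_nonneg _) ?_ ?_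
  · calc (1 - σ) / ρhi * ‖z - x‖ ^ 2 ≤ (1 - σ) / ρ * ‖z - x‖ ^ 2 := by gcongr
      _ = (1 - σ) * ‖z - x‖ ^ 2 / ρ := div_mul_eq_mul_div _ _ _
      _ ≤ ⟪z - x, y - w⟫ := (div_le_iff₀' hρ₀).2 (backwardStep_primal_le hstep herr_primal)
  · calc ρlo * (1 - σ) * ‖y - w‖ ^ 2 ≤ ρ * (1 - σ) * ‖y - w‖ ^ 2 := by gcongr
      _ ≤ ⟪z - x, y - w⟫ := backwardStep_dual_le hstep herr_dual

variable {t : H} {L : ℝ}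

/- A forward step is a backward step with error `e = ρ (y - t)`, where `t` is the value of the
operator at `z`; its relative size in the primal error condition is `σ = ρ L`. -/
theorem forwardStep_primal_le (hρ : 0 ≤ ρ) (hstep : x = z - ρ • (t - w))
    (hlip : ‖t - y‖ ≤ L * ‖z - x‖) : (1 - ρ * L) * ‖z - x‖ ^ 2 ≤ ρ * ⟪z - x, y - w⟫ := by
  refine backwardStep_primal_le (e := -(ρ • (t - y))) (by rw [hstep]; module) ?_
  rw [inner_neg_right, real_inner_smul_right, neg_le_neg_iff]
  calc ρ * ⟪z - x, t - y⟫ ≤ ρ * (‖z - x‖ * (L * ‖z - x‖)) := by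
        gcongr
        exact (real_inner_le_norm _ _).trans (by gcongr)
    _ = ρ * L * ‖z - x‖ ^ 2 := by ring

theorem forwardStep_dual_le (hρ : 0 ≤ ρ) (hρL : ρ * L ≤ 1) (hstep : x = z - ρ • (t - w))
    (hlip : ‖t - y‖ ≤ L * ‖z - x‖) : ρ * ‖y - w‖ ≤ 2 * ‖z - x‖ :=
  calc ρ * ‖y - w‖ = ‖(z - x) - ρ • (t - y)‖ := by
        rw [← norm_smul_of_nonneg hρ, hstep]
        congr 1
        module
    _ ≤ ‖z - x‖ + ρ * ‖t - y‖ := (norm_sub_le _ _).trans_eq (by rw [norm_smul_of_nonneg hρ])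
    _ ≤ ‖z - x‖ + ρ * (L * ‖z - x‖) := by gcongr
    _ = ‖z - x‖ + ρ * L * ‖z - x‖ := by ring
    _ ≤ ‖z - x‖ + 1 * ‖z - x‖ := by gcongr
    _ = 2 * ‖z - x‖ := by ring

theorem exists_pos_mul_le_inner_forwardStep {ρlo ρhi : ℝ} (hρlo : 0 < ρlo) (hρ : ρlo ≤ ρhi)
    (hρL : ρhi * L < 1) :
    ∃ c > 0, ∀ {z x y w t : H} {ρ : ℝ}, ρlo ≤ ρ → ρ ≤ ρhi → x = z - ρ • (t - w) →
      ‖t - y‖ ≤ L * ‖z - x‖ →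
      c * (‖z - x‖ ^ 2 + ‖y - w‖ ^ 2) ≤ ⟪z - x, y - w⟫ := by
  have hρhi : 0 < ρhi := hρlo.trans_le hρ
  set a := 1 / ρhi - L
  have ha : 0 < a := by
    rw [sub_pos, lt_div_iff₀' hρhi]
    exact hρL
  refine ⟨min a (a * (ρlo / 2) ^ 2) / 2, half_pos (lt_min ha (by positivity)), ?_⟩
  intro z x y w t ρ hlo hhi hstep hlip
  have hρ₀ : 0 < ρ := hρlo.trans_le hlo
  have haρ : a ≤ 1 / ρ - L := sub_le_sub_right (one_div_le_one_div_of_le hρ₀ hhi) L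
  have hprimal : a * ‖z - x‖ ^ 2 ≤ ⟪z - x, y - w⟫ :=
    calc a * ‖z - x‖ ^ 2 ≤ (1 / ρ - L) * ‖z - x‖ ^ 2 := by gcongr
      _ = (1 - ρ * L) * ‖z - x‖ ^ 2 / ρ := by field_simp
      _ ≤ ⟪z - x, y - w⟫ := (div_le_iff₀' hρ₀).2 (forwardStep_primal_le hρ₀.le hstep hlip)
  refine min_div_two_mul_add_le (sq_nonneg _) (sq_nonneg _) hprimal ?_
  have hρL' : ρ * L ≤ 1 := (le_div_iff₀' hρ₀).1 (sub_nonneg.1 (ha.le.trans haρ))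
  have hdual : ρlo / 2 * ‖y - w‖ ≤ ‖z - x‖ := by
    have : ρlo * ‖y - w‖ ≤ 2 * ‖z - x‖ :=
      (by gcongr : ρlo * ‖y - w‖ ≤ ρ * ‖y - w‖).trans
        (forwardStep_dual_le hρ₀.le hρL' hstep hlip)
    linarith
  calc a * (ρlo / 2) ^ 2 * ‖y - w‖ ^ 2 = a * (ρlo / 2 * ‖y - w‖) ^ 2 := by ring
    _ ≤ a * ‖z - x‖ ^ 2 := by gcongr
    _ ≤ ⟪z - x, y - w⟫ := hprimal

end Steps

section ProductSpace

variable {H ι : Type*} [NormedAddCommGroup H] [InnerProductSpace ℝ H] {γ : ℝ}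

/-- The point `(z, w)` of the primal-dual space with inner product `γ ⟪z, z'⟫ + ∑ i, ⟪w i, w' i⟫`.
It is encoded as `(√γ z, w)` in the unweighted `ℓ²` product, which is faithful for `0 < γ`. -/
noncomputable def primalDual (γ : ℝ) (z : H) (w : ι → H) :
    WithLp 2 (H × PiLp 2 fun _ : ι => H) :=
  WithLp.toLp 2 (√γ • z, WithLp.toLp 2 w)

theorem primalDual_sub (z z' : H) (w w' : ι → H) :
    primalDual γ z w - primalDual γ z' w' = primalDual γ (z - z') (w - w') := by
  simp only [primalDual, smul_sub, WithLp.toLp_sub, ← Prod.mk_sub_mk]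

theorem smul_primalDual (a : ℝ) (z : H) (w : ι → H) :
    a • primalDual γ z w = primalDual γ (a • z) (a • w) := by
  simp only [primalDual, smul_comm _ a z, WithLp.toLp_smul, ← Prod.smul_mk]

variable [Fintype ι]

theorem inner_primalDual (hγ : 0 ≤ γ) (z z' : H) (w w' : ι → H) :
    ⟪primalDual γ z w, primalDual γ z' w'⟫ = γ * ⟪z, z'⟫ + ∑ i, ⟪w i, w' i⟫ := by
  simp only [primalDual, WithLp.prod_inner_apply, PiLp.inner_apply, real_inner_smul_left,
    real_inner_smul_right, ← mul_assoc, Real.mul_self_sqrt hγ]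

theorem norm_primalDual_sq (hγ : 0 ≤ γ) (z : H) (w : ι → H) :
    ‖primalDual γ z w‖ ^ 2 = γ * ‖z‖ ^ 2 + ∑ i, ‖w i‖ ^ 2 := by
  simp only [← real_inner_self_eq_norm_sq, inner_primalDual hγ]

theorem norm_primalDual_sub_sq (hγ : 0 ≤ γ) (z z' : H) (w w' : ι → H) :
    ‖primalDual γ z w - primalDual γ z' w'‖ ^ 2 = γ * ‖z - z'‖ ^ 2 + ∑ i, ‖w i - w' i‖ ^ 2 := by
  simp only [primalDual_sub, norm_primalDual_sq hγ, Pi.sub_apply]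

end ProductSpace

section Separator

open Fin

variable {H : Type*} {m : ℕ}

section AddCommGroup

variable [AddCommGroup H]

/-- The dual vector `(w₁, …, wₙ)` with `n = m + 1` and `wₙ = -(w₁ + ⋯ + wₙ₋₁)`. -/
def fullDual (w : Fin m → H) : Fin (m + 1) → H :=
  snoc (α := fun _ => H) w (-∑ i, w i)

@[simp]
theorem fullDual_castSucc (w : Fin m → H) (i : Fin m) : fullDual w i.castSucc = w i :=
  snoc_castSucc (α := fun _ => H) _ _ _

@[simp]
theorem fullDual_last (w : Fin m → H) : fullDual w (last m) = -∑ i, w i :=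
  snoc_last (α := fun _ => H) _ _

theorem sum_fullDual (w : Fin m → H) : ∑ i, fullDual w i = 0 := by
  simp [sum_univ_castSucc]

end AddCommGroup

section SeminormedAddCommGroup

variable [SeminormedAddCommGroup H]

/-- The total squared distance from `(z, w)` to the points `(x i, y i)` produced by an iteration,
including the implicit last dual variable. -/
def residual (x y : Fin (m + 1) → H) (z : H) (w : Fin m → H) : ℝ :=
  ∑ i, (‖z - x i‖ ^ 2 + ‖y i - fullDual w i‖ ^ 2)

/-- The part of the squared distance from the points `(x i, y i)` to the solution `(z, w)` that is
controlled by strong monotonicity of the `l`-th operator and cocoercivity of all but the last. -/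
def solutionError (l : Fin (m + 1)) (x y : Fin (m + 1) → H) (z : H) (w : Fin m → H) : ℝ :=
  ‖x l - z‖ ^ 2 + ∑ i : Fin m, ‖y i.castSucc - w i‖ ^ 2

theorem residual_nonneg (x y : Fin (m + 1) → H) (z : H) (w : Fin m → H) :
    0 ≤ residual x y z w :=
  Finset.sum_nonneg fun _ _ => by positivity

theorem solutionError_nonneg (l : Fin (m + 1)) (x y : Fin (m + 1) → H) (z : H) (w : Fin m → H) :
    0 ≤ solutionError l x y z w :=
  add_nonneg (sq_nonneg _) (Finset.sum_nonneg fun _ _ => sq_nonneg _)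

theorem norm_sum_sq_le_residual (x y : Fin (m + 1) → H) (z : H) (w : Fin m → H) :
    ‖∑ i, y i‖ ^ 2 ≤ (m + 1) * residual x y z w :=
  calc ‖∑ i, y i‖ ^ 2 = ‖∑ i, (y i - fullDual w i)‖ ^ 2 := by
        rw [Finset.sum_sub_distrib, sum_fullDual, sub_zero]
    _ ≤ (m + 1) * ∑ i, ‖y i - fullDual w i‖ ^ 2 := by
        simpa using norm_sum_sq_le_card_mul Finset.univ fun i => y i - fullDual w i
    _ ≤ (m + 1) * residual x y z w := by
        unfold residual
        gcongr
        exact le_add_of_nonneg_left (sq_nonneg _)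

theorem norm_castSucc_sub_last_sq_le_residual (x y : Fin (m + 1) → H) (z : H) (w : Fin m → H)
    (i : Fin m) : ‖x i.castSucc - x (last m)‖ ^ 2 ≤ 2 * residual x y z w := by
  have hz : ‖z - x i.castSucc‖ ^ 2 ≤ ∑ j : Fin m, ‖z - x j.castSucc‖ ^ 2 :=
    Finset.single_le_sum (f := fun j : Fin m => ‖z - x j.castSucc‖ ^ 2)
      (fun _ _ => sq_nonneg _) (Finset.mem_univ i)
  calc ‖x i.castSucc - x (last m)‖ ^ 2
      ≤ 2 * (‖z - x i.castSucc‖ ^ 2 + ‖z - x (last m)‖ ^ 2) := by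
        rw [norm_sub_rev z (x i.castSucc)]
        exact norm_sub_sq_le_two_mul _ z _
    _ ≤ 2 * ∑ j, ‖z - x j‖ ^ 2 := by
        rw [sum_univ_castSucc]
        gcongr
    _ ≤ 2 * residual x y z w := by
        unfold residual
        gcongr
        exact le_add_of_nonneg_right (sq_nonneg _)

variable [InnerProductSpace ℝ H]

/-- The separator function of projective splitting built from the points `(x i, y i)`. -/
noncomputable def separator (x y : Fin (m + 1) → H) (z : H) (w : Fin m → H) : ℝ :=
  ∑ i, ⟪z - x i, y i - fullDual w i⟫

theorem separator_eq_sum_add_last (x y : Fin (m + 1) → H) (z : H) (w : Fin m → H) :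
    separator x y z w = (∑ i : Fin m, ⟪z - x i.castSucc, y i.castSucc - w i⟫) +
      ⟪z - x (last m), y (last m) + ∑ i, w i⟫ := by
  simp only [separator, sum_univ_castSucc, fullDual_castSucc, fullDual_last, sub_neg_eq_add]

theorem neg_separator (x y : Fin (m + 1) → H) (z : H) (w : Fin m → H) :
    -separator x y z w = ∑ i, ⟪x i - z, y i - fullDual w i⟫ := by
  simp only [separator, ← Finset.sum_neg_distrib, ← inner_neg_left, neg_sub]

/- The terms `⟪z, w i⟫` of the separator cancel because the full dual vector sums to zero. -/
theorem separator_eq_inner_sub (x y : Fin (m + 1) → H) (z : H) (w : Fin m → H) :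
    separator x y z w = ⟪z, ∑ i, y i⟫ + ∑ i : Fin m, ⟪w i, x i.castSucc - x (last m)⟫ -
      ∑ i, ⟪x i, y i⟫ := by
  have hdual : ∑ i, ⟪fullDual w i, x i⟫ = ∑ i : Fin m, ⟪w i, x i.castSucc - x (last m)⟫ := by
    simp only [sum_univ_castSucc, fullDual_castSucc, fullDual_last, inner_neg_left, sum_inner,
      inner_sub_right, Finset.sum_sub_distrib, ← sub_eq_add_neg]
  have hcancel : ∑ i, ⟪z, fullDual w i⟫ = 0 := by
    rw [← inner_sum, sum_fullDual, inner_zero_right]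
  calc separator x y z w
      = ∑ i, (⟪z, y i⟫ - ⟪z, fullDual w i⟫ + ⟪fullDual w i, x i⟫ - ⟪x i, y i⟫) := by
        refine Finset.sum_congr rfl fun i _ => ?_
        rw [inner_sub_left, inner_sub_right, inner_sub_right, real_inner_comm (fullDual w i) (x i)]
        ring
    _ = _ := by
        rw [Finset.sum_sub_distrib, Finset.sum_add_distrib, Finset.sum_sub_distrib, hcancel, hdual,
          sub_zero, inner_sum]

theorem mul_residual_le_separator {c : ℝ} {x y : Fin (m + 1) → H} {z : H} {w : Fin m → H}
    (h : ∀ i, c * (‖z - x i‖ ^ 2 + ‖y i - fullDual w i‖ ^ 2) ≤ ⟪z - x i, y i - fullDual w i⟫) :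
    c * residual x y z w ≤ separator x y z w := by
  rw [residual, Finset.mul_sum]
  exact Finset.sum_le_sum fun i _ => h i

end SeminormedAddCommGroup

variable [NormedAddCommGroup H] [InnerProductSpace ℝ H] {γ : ℝ}

/-- The gradient of `separator x y` with respect to the `γ`-weighted inner product. -/
noncomputable def separatorGradient (γ : ℝ) (x y : Fin (m + 1) → H) :
    WithLp 2 (H × PiLp 2 fun _ : Fin m => H) :=
  primalDual γ ((1 / γ) • ∑ i, y i) fun i => x i.castSucc - x (last m)

theorem inner_primalDual_sub_separatorGradient (hγ : 0 < γ) (x y : Fin (m + 1) → H) (z z' : H)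
    (w w' : Fin m → H) :
    ⟪primalDual γ z w - primalDual γ z' w', separatorGradient γ x y⟫ =
      separator x y z w - separator x y z' w' := by
  have hinner (z : H) (w : Fin m → H) : ⟪primalDual γ z w, separatorGradient γ x y⟫ =
      ⟪z, ∑ i, y i⟫ + ∑ i : Fin m, ⟪w i, x i.castSucc - x (last m)⟫ := by
    rw [separatorGradient, inner_primalDual hγ.le, real_inner_smul_right, ← mul_assoc,
      mul_one_div_cancel hγ.ne', one_mul]
  rw [inner_sub_left, hinner, hinner, separator_eq_inner_sub, separator_eq_inner_sub,
    sub_sub_sub_cancel_right]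

theorem norm_separatorGradient_sq (hγ : 0 < γ) (x y : Fin (m + 1) → H) :
    ‖separatorGradient γ x y‖ ^ 2 =
      (1 / γ) * ‖∑ i, y i‖ ^ 2 + ∑ i : Fin m, ‖x i.castSucc - x (last m)‖ ^ 2 := by
  rw [separatorGradient, norm_primalDual_sq hγ.le, norm_smul_of_nonneg (by positivity)]
  field_simp

theorem primalDual_sub_smul_separatorGradient (α : ℝ) (x y : Fin (m + 1) → H) (z : H)
    (w : Fin m → H) :
    primalDual γ z w - α • separatorGradient γ x y =
      primalDual γ (z - ((1 / γ) * α) • ∑ i, y i)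
        fun i => w i - α • (x i.castSucc - x (last m)) := by
  rw [separatorGradient, smul_primalDual, primalDual_sub, smul_smul, mul_comm α]
  rfl

theorem norm_separatorGradient_sq_le (hγ : 0 < γ) (x y : Fin (m + 1) → H) (z : H)
    (w : Fin m → H) :
    ‖separatorGradient γ x y‖ ^ 2 ≤ ((1 / γ) * (m + 1) + m * 2) * residual x y z w := by
  rw [norm_separatorGradient_sq hγ, add_mul, mul_assoc, mul_assoc]
  gcongr
  · exact norm_sum_sq_le_residual x y z w
  · simpa using Finset.sum_le_card_nsmul Finset.univ _ _ fun i _ =>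
      norm_castSucc_sub_last_sq_le_residual x y z w i

theorem norm_primalDual_sub_sq_le (hγ : 0 ≤ γ) (l : Fin (m + 1)) (x y : Fin (m + 1) → H)
    (z z' : H) (w w' : Fin m → H) :
    ‖primalDual γ z w - primalDual γ z' w'‖ ^ 2 ≤
      2 * (γ + 1) * (residual x y z w + solutionError l x y z' w') := by
  have hprimal : ‖z - x l‖ ^ 2 ≤ residual x y z w :=
    (le_add_of_nonneg_right (sq_nonneg _)).trans
      (Finset.single_le_sum (f := fun i => ‖z - x i‖ ^ 2 + ‖y i - fullDual w i‖ ^ 2)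
        (fun _ _ => by positivity) (Finset.mem_univ l))
  have hdual : ∑ i : Fin m, ‖w i - y i.castSucc‖ ^ 2 ≤ residual x y z w := by
    rw [residual, sum_univ_castSucc]
    refine le_add_of_le_of_nonneg (Finset.sum_le_sum fun i _ => ?_) (by positivity)
    rw [fullDual_castSucc, norm_sub_rev]
    exact le_add_of_nonneg_left (sq_nonneg _)
  have hz : ‖z - z'‖ ^ 2 ≤ 2 * (residual x y z w + solutionError l x y z' w') := by
    refine (norm_sub_sq_le_two_mul z (x l) z').trans ?_
    unfold solutionError
    gcongr
    exact le_add_of_nonneg_right (Finset.sum_nonneg fun _ _ => sq_nonneg _)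
  have hw : ∑ i, ‖w i - w' i‖ ^ 2 ≤ 2 * (residual x y z w + solutionError l x y z' w') :=
    calc ∑ i, ‖w i - w' i‖ ^ 2
        ≤ ∑ i : Fin m, 2 * (‖w i - y i.castSucc‖ ^ 2 + ‖y i.castSucc - w' i‖ ^ 2) :=
          Finset.sum_le_sum fun i _ => norm_sub_sq_le_two_mul _ _ _
      _ = 2 * (∑ i : Fin m, ‖w i - y i.castSucc‖ ^ 2 +
            ∑ i : Fin m, ‖y i.castSucc - w' i‖ ^ 2) := by
          rw [← Finset.mul_sum, Finset.sum_add_distrib]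
      _ ≤ 2 * (residual x y z w + solutionError l x y z' w') := by
          gcongr
          exact le_add_of_nonneg_left (sq_nonneg _)
  calc ‖primalDual γ z w - primalDual γ z' w'‖ ^ 2
      = γ * ‖z - z'‖ ^ 2 + ∑ i, ‖w i - w' i‖ ^ 2 := norm_primalDual_sub_sq hγ z z' w w'
    _ ≤ γ * (2 * (residual x y z w + solutionError l x y z' w')) +
          2 * (residual x y z w + solutionError l x y z' w') := by gcongr
    _ = 2 * (γ + 1) * (residual x y z w + solutionError l x y z' w') := by ring

theorem exists_separatorStep_contraction {c κ βlo βhi : ℝ} (hγ : 0 < γ) (hc : 0 < c) (hκ : 0 < κ)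
    (hβlo : 0 < βlo) (hβhi : βhi < 2) :
    ∃ r, 0 ≤ r ∧ r < 1 ∧ ∀ {l : Fin (m + 1)} {x y : Fin (m + 1) → H} {z z' : H}
      {w w' : Fin m → H} {β : ℝ}, ‖separatorGradient γ x y‖ ≠ 0 →
      c * residual x y z w ≤ separator x y z w →
      κ * solutionError l x y z' w' ≤ -separator x y z' w' → βlo ≤ β → β ≤ βhi →
      ‖primalDual γ z w - (β * separator x y z w / ‖separatorGradient γ x y‖ ^ 2) •
          separatorGradient γ x y - primalDual γ z' w'‖ ^ 2 ≤
        r * ‖primalDual γ z w - primalDual γ z' w'‖ ^ 2 := by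
  obtain ⟨r, hr₀, hr₁, hcontract⟩ := exists_relaxedProjection_contraction
    (V := WithLp 2 (H × PiLp 2 fun _ : Fin m => H)) (C := (1 / γ) * (m + 1) + m * 2)
    (K := 2 * (γ + 1)) hc (by positivity) hκ (by positivity) hβlo hβhi
  refine ⟨r, hr₀, hr₁, fun {l x y z z' w w' β} hg hsep hgap hlo hhi => ?_⟩
  exact hcontract hg (inner_primalDual_sub_separatorGradient hγ x y z z' w w')
    (residual_nonneg x y z w) (solutionError_nonneg l x y z' w') hsep hgap
    (norm_separatorGradient_sq_le hγ x y z w) (norm_primalDual_sub_sq_le hγ.le l x y z z' w w')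
    hlo hhi

theorem exists_linear_rate_of_separatorStep {c κ βlo βhi : ℝ} (hγ : 0 < γ) (hc : 0 < c)
    (hκ : 0 < κ) (hβlo : 0 < βlo) (hβhi : βhi < 2) {l : Fin (m + 1)} {x y : ℕ → Fin (m + 1) → H}
    {z : ℕ → H} {w : ℕ → Fin m → H} {z' : H} {w' : Fin m → H} {β : ℕ → ℝ}
    (hβ : ∀ k, 1 ≤ k → βlo ≤ β k ∧ β k ≤ βhi)
    (hg : ∀ k, 1 ≤ k → ‖separatorGradient γ (x k) (y k)‖ ≠ 0)
    (hsep : ∀ k, 1 ≤ k →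
      c * residual (x k) (y k) (z k) (w k) ≤ separator (x k) (y k) (z k) (w k))
    (hgap : ∀ k, 1 ≤ k → κ * solutionError l (x k) (y k) z' w' ≤ -separator (x k) (y k) z' w')
    (hstep : ∀ k, 1 ≤ k → primalDual γ (z (k + 1)) (w (k + 1)) = primalDual γ (z k) (w k) -
      (β k * separator (x k) (y k) (z k) (w k) / ‖separatorGradient γ (x k) (y k)‖ ^ 2) •
        separatorGradient γ (x k) (y k)) :
    ∃ r, 0 ≤ r ∧ r < 1 ∧
      (∀ k, 1 ≤ k → ‖primalDual γ (z (k + 1)) (w (k + 1)) - primalDual γ z' w'‖ ^ 2 ≤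
        r * ‖primalDual γ (z k) (w k) - primalDual γ z' w'‖ ^ 2) ∧
      ∀ k, 1 ≤ k → ‖primalDual γ (z k) (w k) - primalDual γ z' w'‖ ^ 2 ≤
        r ^ (k - 1) * ‖primalDual γ (z 1) (w 1) - primalDual γ z' w'‖ ^ 2 := by
  obtain ⟨r, hr₀, hr₁, hcontract⟩ :=
    exists_separatorStep_contraction (H := H) (m := m) hγ hc hκ hβlo hβhi
  set d : ℕ → ℝ := fun k => ‖primalDual γ (z k) (w k) - primalDual γ z' w'‖ ^ 2
  have hdecrease (k) (hk : 1 ≤ k) : d (k + 1) ≤ r * d k := by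
    simp only [d, hstep k hk]
    exact hcontract (hg k hk) (hsep k hk) (hgap k hk) (hβ k hk).1 (hβ k hk).2
  refine ⟨r, hr₀, hr₁, hdecrease, fun k hk => ?_⟩
  simpa only [Nat.sub_add_cancel hk] using
    le_geom (u := fun j => d (j + 1)) hr₀ (k - 1) fun j _ => hdecrease (j + 1) j.succ_pos

end Separator

section Operators

open Fin

variable {H : Type*} {m : ℕ} {T : Fin (m + 1) → H → Set H} {Tc : Fin m → H → H} {zstar : H}

theorem fullDual_mem [AddCommGroup H] (hsingle : ∀ i : Fin m, Tc i zstar ∈ T i.castSucc zstar)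
    (hzstar : -(∑ i, Tc i zstar) ∈ T (last m) zstar) (i : Fin (m + 1)) :
    fullDual (fun i => Tc i zstar) i ∈ T i zstar := by
  induction i using lastCases with
  | last => rwa [fullDual_last]
  | cast i => rw [fullDual_castSucc]; exact hsingle i

theorem exists_pos_mul_solutionError_le_neg_separator [SeminormedAddCommGroup H]
    [InnerProductSpace ℝ H] {l : Fin (m + 1)} {μ : ℝ} {Γ : Fin m → ℝ}
    (hlast : ∀ x x' y y' : H, y ∈ T (last m) x → y' ∈ T (last m) x' → 0 ≤ ⟪x - x', y - y'⟫)
    (hμ : 0 < μ)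
    (hstrong : ∀ x x' y y' : H, y ∈ T l x → y' ∈ T l x' → μ * ‖x - x'‖ ^ 2 ≤ ⟪x - x', y - y'⟫)
    (hΓ : ∀ i, 0 < Γ i) (hsingle : ∀ i u, T (castSucc i) u = {Tc i u})
    (hcoco : ∀ i u v, (Γ i)⁻¹ * ‖Tc i u - Tc i v‖ ^ 2 ≤ ⟪u - v, Tc i u - Tc i v⟫)
    (hzstar : -(∑ i, Tc i zstar) ∈ T (last m) zstar) :
    ∃ κ > 0, ∀ x y : Fin (m + 1) → H, (∀ i, y i ∈ T i (x i)) →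
      κ * solutionError l x y zstar (fun i => Tc i zstar) ≤
        -separator x y zstar fun i => Tc i zstar := by
  obtain ⟨ν, hν, hν_coco⟩ := exists_pos_forall_mul_le
    (f := fun i (p : H × H) => ‖Tc i p.1 - Tc i p.2‖ ^ 2)
    (fun _ _ => sq_nonneg _) fun i => ⟨(Γ i)⁻¹, inv_pos.2 (hΓ i), fun p => hcoco i p.1 p.2⟩
  refine ⟨min μ ν / 2, half_pos (lt_min hμ hν), fun x y hy => ?_⟩
  set v := fullDual fun i => Tc i zstar
  have hv : ∀ i, v i ∈ T i zstar :=
    fullDual_mem (fun i => by rw [hsingle]; exact Set.mem_singleton _) hzstar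
  have hdual (i : Fin m) : ν * ‖y i.castSucc - Tc i zstar‖ ^ 2 ≤
      ⟪x i.castSucc - zstar, y i.castSucc - v i.castSucc⟫ := by
    have hyi : y i.castSucc = Tc i (x i.castSucc) := by
      simpa only [hsingle, Set.mem_singleton_iff] using hy i.castSucc
    simp only [v, fullDual_castSucc, hyi]
    exact hν_coco i (x i.castSucc, zstar)
  have hmono_last : 0 ≤ ⟪x (last m) - zstar, y (last m) - v (last m)⟫ :=
    hlast _ _ _ _ (hy _) (hv _)
  have hmono (i : Fin (m + 1)) : 0 ≤ ⟪x i - zstar, y i - v i⟫ := by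
    induction i using lastCases with
    | last => exact hmono_last
    | cast i => exact (mul_nonneg hν.le (sq_nonneg _)).trans (hdual i)
  rw [neg_separator]
  refine min_div_two_mul_add_le (sq_nonneg _) (Finset.sum_nonneg fun _ _ => sq_nonneg _) ?_ ?_
  · exact (hstrong _ _ _ _ (hy l) (hv l)).trans
      (Finset.single_le_sum (f := fun i => ⟪x i - zstar, y i - v i⟫) (fun i _ => hmono i)
        (Finset.mem_univ l))
  · rw [Finset.mul_sum, sum_univ_castSucc]
    exact le_add_of_le_of_nonneg (Finset.sum_le_sum fun i _ => hdual i) hmono_last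

end Operators

end ProjectiveSplitting

open ProjectiveSplitting in
theorem linear_convergence_strongly_monotone_cocoercive_general
    {H : Type*} [NormedAddCommGroup H] [InnerProductSpace ℝ H] {m : ℕ} {γ : ℝ} (hγ : 0 < γ)
    {T : Fin (m + 1) → H → Set H}
    (hlast : ∀ x x' y y' : H, y ∈ T (Fin.last m) x → y' ∈ T (Fin.last m) x' →
      0 ≤ ⟪x - x', y - y'⟫)
    {l : Fin (m + 1)} {μ : ℝ} (hμ : 0 < μ)
    (hstrong : ∀ x x' y y' : H, y ∈ T l x → y' ∈ T l x' →
      μ * ‖x - x'‖ ^ 2 ≤ ⟪x - x', y - y'⟫)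
    {Tc : Fin m → H → H} {Γ : Fin m → ℝ} (hΓ : ∀ i, 0 < Γ i)
    (hsingle : ∀ i u, T (Fin.castSucc i) u = {Tc i u})
    (hcoco : ∀ i u v, (Γ i)⁻¹ * ‖Tc i u - Tc i v‖ ^ 2 ≤ ⟪u - v, Tc i u - Tc i v⟫)
    {zstar : H} (hzstar : -(∑ i, Tc i zstar) ∈ T (Fin.last m) zstar)
    {B F : Finset (Fin (m + 1))} (hBF : B ∪ F = Finset.univ)
    {Tfun : Fin (m + 1) → H → H} {L : Fin (m + 1) → ℝ}
    (hFsingle : ∀ i ∈ F, ∀ u, T i u = {Tfun i u})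
    (hLip : ∀ i ∈ F, ∀ u v, ‖Tfun i u - Tfun i v‖ ≤ L i * ‖u - v‖)
    {z : ℕ → H} {w : ℕ → Fin m → H} {wfull : ℕ → Fin (m + 1) → H}
    (hwfull : ∀ k, wfull k = fullDual (w k))
    {x y : ℕ → Fin (m + 1) → H} {ρ : ℕ → Fin (m + 1) → ℝ} {e : ℕ → Fin (m + 1) → H}
    {σ : ℝ} (hσ : σ < 1)
    {β : ℕ → ℝ} {βlo βhi : ℝ} (hβlo : 0 < βlo) (hβhi : βhi < 2)
    (hβ : ∀ k, 1 ≤ k → βlo ≤ β k ∧ β k ≤ βhi)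
    {ρlo ρhi : ℝ} {ρbar : Fin (m + 1) → ℝ} (hρlo : 0 < ρlo)
    (hρge : ∀ k, 1 ≤ k → ∀ i, ρlo ≤ ρ k i)
    (hρB : ∀ k, 1 ≤ k → ∀ i ∈ B, ρ k i ≤ ρhi)
    (hρF : ∀ k, 1 ≤ k → ∀ i ∈ F, ρ k i ≤ ρbar i ∧ ρbar i * L i < 1)
    (hback : ∀ k, 1 ≤ k → ∀ i ∈ B, y k i ∈ T i (x k i) ∧
      x k i + ρ k i • y k i = z k + ρ k i • wfull k i + e k i)
    (hforw : ∀ k, 1 ≤ k → ∀ i ∈ F,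
      x k i = z k - ρ k i • (Tfun i (z k) - wfull k i) ∧ y k i = Tfun i (x k i))
    (herr_primal : ∀ k, 1 ≤ k → ∀ i ∈ B, -(σ * ‖z k - x k i‖ ^ 2) ≤ ⟪z k - x k i, e k i⟫)
    (herr_dual : ∀ k, 1 ≤ k → ∀ i ∈ B,
      ⟪e k i, y k i - wfull k i⟫ ≤ ρ k i * σ * ‖y k i - wfull k i‖ ^ 2)
    {π φval α : ℕ → ℝ}
    (hπ : ∀ k, 1 ≤ k → π k = (1 / γ) * ‖∑ i, y k i‖ ^ 2
      + ∑ i : Fin m, ‖x k i.castSucc - x k (Fin.last m)‖ ^ 2)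
    (hπpos : ∀ k, 1 ≤ k → 0 < π k)
    (hφval : ∀ k, 1 ≤ k →
      φval k = (∑ i : Fin m, ⟪z k - x k i.castSucc, y k i.castSucc - w k i⟫)
        + ⟪z k - x k (Fin.last m), y k (Fin.last m) + ∑ i, w k i⟫)
    (hα : ∀ k, 1 ≤ k → α k = β k * φval k / π k)
    (hzupd : ∀ k, 1 ≤ k → z (k + 1) = z k - ((1 / γ) * α k) • ∑ i, y k i)
    (hwupd : ∀ k, 1 ≤ k → ∀ i : Fin m,
      w (k + 1) i = w k i - α k • (x k i.castSucc - x k (Fin.last m))) :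
    ∃ r : ℝ, 0 ≤ r ∧ r < 1 ∧
      (∀ k, 1 ≤ k →
        γ * ‖z (k + 1) - zstar‖ ^ 2 + ∑ i, ‖w (k + 1) i - Tc i zstar‖ ^ 2
          ≤ r * (γ * ‖z k - zstar‖ ^ 2 + ∑ i, ‖w k i - Tc i zstar‖ ^ 2)) ∧
      (∀ k, 1 ≤ k →
        γ * ‖z k - zstar‖ ^ 2 + ∑ i, ‖w k i - Tc i zstar‖ ^ 2
          ≤ r ^ (k - 1) * (γ * ‖z 1 - zstar‖ ^ 2 + ∑ i, ‖w 1 i - Tc i zstar‖ ^ 2)) := by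
  have hmem (i) : i ∈ B ∨ i ∈ F := Finset.mem_union.1 (hBF ▸ Finset.mem_univ i)
  have hyT (k) (hk : 1 ≤ k) (i) : y k i ∈ T i (x k i) := by
    rcases hmem i with hi | hi
    · exact (hback k hk i hi).1
    · simp only [hFsingle i hi, (hforw k hk i hi).2, Set.mem_singleton_iff]
  have hcoercive (i) : ∃ c > 0, ∀ k : {k // 1 ≤ k},
      c * (‖z k - x k i‖ ^ 2 + ‖y k i - wfull k i‖ ^ 2) ≤ ⟪z k - x k i, y k i - wfull k i⟫ := by
    rcases hmem i with hi | hi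
    · obtain ⟨c, hc, h⟩ := exists_pos_mul_le_inner_backwardStep (H := H) hρlo
        ((hρge 1 le_rfl i).trans (hρB 1 le_rfl i hi)) hσ
      exact ⟨c, hc, fun ⟨k, hk⟩ => h (hρge k hk i) (hρB k hk i hi) (hback k hk i hi).2
        (herr_primal k hk i hi) (herr_dual k hk i hi)⟩
    · obtain ⟨c, hc, h⟩ := exists_pos_mul_le_inner_forwardStep (H := H) hρlo
        ((hρge 1 le_rfl i).trans (hρF 1 le_rfl i hi).1) (hρF 1 le_rfl i hi).2
      refine ⟨c, hc, fun ⟨k, hk⟩ => h (hρge k hk i) (hρF k hk i hi).1 (hforw k hk i hi).1 ?_⟩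
      rw [(hforw k hk i hi).2]
      exact hLip i hi _ _
  obtain ⟨c, hc, hsep⟩ := exists_pos_forall_mul_le (fun _ _ => by positivity) hcoercive
  obtain ⟨κ, hκ, hgap⟩ :=
    exists_pos_mul_solutionError_le_neg_separator hlast hμ hstrong hΓ hsingle hcoco hzstar
  have hπ_eq (k) (hk : 1 ≤ k) : π k = ‖separatorGradient γ (x k) (y k)‖ ^ 2 := by
    rw [hπ k hk, norm_separatorGradient_sq hγ]
  have hφ_eq (k) (hk : 1 ≤ k) : φval k = separator (x k) (y k) (z k) (w k) := by
    rw [hφval k hk, separator_eq_sum_add_last]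
  have hstep (k) (hk : 1 ≤ k) : primalDual γ (z (k + 1)) (w (k + 1)) =
      primalDual γ (z k) (w k) - α k • separatorGradient γ (x k) (y k) := by
    simp only [primalDual_sub_smul_separatorGradient, ← hzupd k hk, ← hwupd k hk]
  have hg (k) (hk : 1 ≤ k) : ‖separatorGradient γ (x k) (y k)‖ ≠ 0 :=
    (pow_ne_zero_iff two_ne_zero).1 (hπ_eq k hk ▸ (hπpos k hk).ne')
  simp only [← norm_primalDual_sub_sq hγ.le]
  exact exists_linear_rate_of_separatorStep hγ hc hκ hβlo hβhi hβ hg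
    (fun k hk => mul_residual_le_separator fun i => hwfull k ▸ hsep i ⟨k, hk⟩)
    (fun k hk => hgap _ _ (hyT k hk))
    fun k hk => by rw [hstep k hk, hα k hk, hπ_eq k hk, hφ_eq k hk]

/-- Linear convergence of projective splitting under strong monotonicity
of `T l` and cocoercivity of `T₁,…,T_{n−1}`: if the algorithm runs forever, there is
`r ∈ [0,1)`, independent of `k`, such that `‖p^{k+1} − p*‖_γ² ≤ r ‖p^k − p*‖_γ²` for all
`k ≥ 1`, and in particular `‖p^k − p*‖_γ² ≤ r^{k−1} ‖p¹ − p*‖_γ²`.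
Here `n = m+1 ≥ 1`, `p* = (z*, T₁z*, …, T_{n−1}z*)`, and
`‖(z,w)‖_γ² = γ‖z‖² + Σᵢ‖wᵢ‖²`. -/
theorem linear_convergence_strongly_monotone_cocoercive
    {H : Type*} [NormedAddCommGroup H] [InnerProductSpace ℝ H] [CompleteSpace H]
    (m : ℕ) (γ : ℝ) (hγ : 0 < γ)
    (T : Fin (m+1) → H → Set H)
    (hT : ∀ i, ∀ x x' y y' : H, y ∈ T i x → y' ∈ T i x' → 0 ≤ ⟪x - x', y - y'⟫)
    (l : Fin (m+1)) (μ : ℝ) (hμ : 0 < μ)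
    (hstrong : ∀ x x' y y' : H, y ∈ T l x → y' ∈ T l x' →
      μ * ‖x - x'‖ ^ 2 ≤ ⟪x - x', y - y'⟫)
    (Tc : Fin m → H → H) (Γ : Fin m → ℝ) (hΓ : ∀ i, 0 < Γ i)
    (hsingle : ∀ i : Fin m, ∀ u : H, T i.castSucc u = {Tc i u})
    (hcoco : ∀ i : Fin m, ∀ u v : H,
      (Γ i)⁻¹ * ‖Tc i u - Tc i v‖ ^ 2 ≤ ⟪u - v, Tc i u - Tc i v⟫)
    (zstar : H) (hzstar : -(∑ i : Fin m, Tc i zstar) ∈ T (Fin.last m) zstar)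
    (B F : Finset (Fin (m+1))) (hBF : Disjoint B F) (hBFunion : B ∪ F = Finset.univ)
    (Tfun : Fin (m+1) → H → H) (L : Fin (m+1) → ℝ) (hL0 : ∀ i ∈ F, 0 ≤ L i)
    (hFsingle : ∀ i ∈ F, ∀ u : H, T i u = {Tfun i u})
    (hLip : ∀ i ∈ F, ∀ u v : H, ‖Tfun i u - Tfun i v‖ ≤ L i * ‖u - v‖)
    (z : ℕ → H) (w : ℕ → Fin m → H) (wfull : ℕ → Fin (m+1) → H)
    (hwfull : ∀ k, wfull k = Fin.snoc (w k) (-(∑ i : Fin m, w k i)))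
    (x y : ℕ → Fin (m+1) → H) (ρ : ℕ → Fin (m+1) → ℝ) (e : ℕ → Fin (m+1) → H)
    (σ δ : ℝ) (hσ0 : 0 ≤ σ) (hσ1 : σ < 1) (hδ : 0 ≤ δ)
    (β : ℕ → ℝ) (βlo βhi : ℝ) (hβlo : 0 < βlo) (hβle : βlo ≤ βhi) (hβhi : βhi < 2)
    (hβ : ∀ k, 1 ≤ k → βlo ≤ β k ∧ β k ≤ βhi)
    (ρlo ρhi : ℝ) (ρbar : Fin (m+1) → ℝ) (hρlo : 0 < ρlo)
    (hρge : ∀ k, 1 ≤ k → ∀ i, ρlo ≤ ρ k i)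
    (hρB : ∀ k, 1 ≤ k → ∀ i ∈ B, ρ k i ≤ ρhi)
    (hρF : ∀ k, 1 ≤ k → ∀ i ∈ F, ρ k i ≤ ρbar i ∧ ρbar i * L i < 1)
    (hback : ∀ k, 1 ≤ k → ∀ i ∈ B, y k i ∈ T i (x k i) ∧
      x k i + ρ k i • y k i = z k + ρ k i • wfull k i + e k i)
    (hforw : ∀ k, 1 ≤ k → ∀ i ∈ F,
      x k i = z k - ρ k i • (Tfun i (z k) - wfull k i) ∧ y k i = Tfun i (x k i))
    (herr1 : ∀ k, 1 ≤ k → ∀ i ∈ B, -(σ * ‖z k - x k i‖ ^ 2) ≤ ⟪z k - x k i, e k i⟫)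
    (herr2 : ∀ k, 1 ≤ k → ∀ i ∈ B,
      ⟪e k i, y k i - wfull k i⟫ ≤ ρ k i * σ * ‖y k i - wfull k i‖ ^ 2)
    (herr3 : ∀ k, 1 ≤ k → ∀ i ∈ B, ‖e k i‖ ^ 2 ≤ δ * ‖z k - x k i‖ ^ 2)
    (π φval α : ℕ → ℝ)
    (hπ : ∀ k, 1 ≤ k → π k = (1 / γ) * ‖∑ i : Fin (m+1), y k i‖ ^ 2
      + ∑ i : Fin m, ‖x k i.castSucc - x k (Fin.last m)‖ ^ 2)
    (hπpos : ∀ k, 1 ≤ k → 0 < π k)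
    (hφval : ∀ k, 1 ≤ k →
      φval k = (∑ i : Fin m, ⟪z k - x k i.castSucc, y k i.castSucc - w k i⟫)
        + ⟪z k - x k (Fin.last m), y k (Fin.last m) + ∑ i : Fin m, w k i⟫)
    (hα : ∀ k, 1 ≤ k → α k = β k * φval k / π k)
    (hzupd : ∀ k, 1 ≤ k → z (k+1) = z k - ((1 / γ) * α k) • (∑ i : Fin (m+1), y k i))
    (hwupd : ∀ k, 1 ≤ k → ∀ i : Fin m,
      w (k+1) i = w k i - α k • (x k i.castSucc - x k (Fin.last m))) :
    ∃ r : ℝ, 0 ≤ r ∧ r < 1 ∧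
      (∀ k, 1 ≤ k →
        γ * ‖z (k+1) - zstar‖ ^ 2 + ∑ i : Fin m, ‖w (k+1) i - Tc i zstar‖ ^ 2
          ≤ r * (γ * ‖z k - zstar‖ ^ 2 + ∑ i : Fin m, ‖w k i - Tc i zstar‖ ^ 2)) ∧
      (∀ k, 1 ≤ k →
        γ * ‖z k - zstar‖ ^ 2 + ∑ i : Fin m, ‖w k i - Tc i zstar‖ ^ 2
          ≤ r ^ (k - 1) *
            (γ * ‖z 1 - zstar‖ ^ 2 + ∑ i : Fin m, ‖w 1 i - Tc i zstar‖ ^ 2)) := by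
  exact linear_convergence_strongly_monotone_cocoercive_general hγ (hT (Fin.last m)) hμ hstrong hΓ
    hsingle hcoco hzstar hBFunion hFsingle hLip hwfull hσ1 hβlo hβhi hβ hρlo hρge hρB hρF hback
    hforw herr1 herr2 hπ hπpos hφval hα hzupd hwupd
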